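/- arXiv:2010.07031 — 9 statements merged into one kernel-verified Lean document; each statement's English description precedes it below -/
import Mathlib

section
/- Weighted form of Proposition 1 (a sufficiently heavy set of nodes contains a correct node): let w : α → ℕ be a voting power assignment, V a finite set of nodes (the next validator set NextV of a trusted block), C ⊆ V a finite set (the correct validators guaranteed by the Tendermint security model within the trusting period) satisfying 3 · totalVP(C) > 2 · totalVP(V), and N a finite set of nodes such that 3 · totalVP(N ∩ V) > totalVP(V). Then N ∩ C is nonempty, i.e., N contains a correct node. -/
/-- Total voting power of a finite set of nodes under voting power assignment `w`. -/
def totalVP {α : Type*} (w : α → ℕ) (S : Finset α) : ℕ := ∑ x ∈ S, w x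

/-- Weighted form of Proposition 1: a set `N` whose intersection with the
trusted next-validator set `V` carries more than one third of the voting power
of `V` must contain a correct node, given that the correct validators `C ⊆ V`
carry more than two thirds of the voting power of `V`. -/
theorem heavy_set_contains_correct_node {α : Type*} [DecidableEq α]
    (w : α → ℕ) (V C N : Finset α)
    (hCV : C ⊆ V)
    (hC : 3 * totalVP w C > 2 * totalVP w V)
    (hN : 3 * totalVP w (N ∩ V) > totalVP w V) :
    (N ∩ C).Nonempty := by
  by_contra h
  have hdisj : Disjoint (N ∩ V) C :=
    (Finset.disjoint_iff_inter_eq_empty.2 (Finset.not_nonempty_iff_eq_empty.1 h)).mono_left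
      Finset.inter_subset_left
  -- Disjoint subsets of `V` cannot together outweigh `V`.
  have hle : totalVP w (N ∩ V) + totalVP w C ≤ totalVP w V := by
    unfold totalVP
    rw [← Finset.sum_union hdisj]
    exact Finset.sum_le_sum_of_subset (Finset.union_subset Finset.inter_subset_right hCV)
  omega
end

section
/- Soundness of sequential verification (a two-thirds commit under the security model contains a correct signer, unit voting powers): let V be a finite set of nodes (the validator set of a block), F a finite set of nodes (the faulty nodes) with |V \ F| > 2 · |V ∩ F|, and S a finite set of nodes (the signers of a commit for the block) with 3 · |S ∩ V| > 2 · |V|. Then there exists a node x ∈ S ∩ V with x ∉ F, i.e., the commit contains the signature of at least one correct validator. -/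
/-- Soundness of sequential verification (unit voting powers): if the correct
members of the validator set `V` outweigh twice the faulty members, then a
commit signed by more than two thirds of `V` contains the signature of at
least one correct validator. -/
theorem sequential_commit_has_correct_signer_card {α : Type*} [DecidableEq α]
    (V F S : Finset α)
    (hF : (V \ F).card > 2 * (V ∩ F).card)
    (hS : 3 * (S ∩ V).card > 2 * V.card) :
    ∃ x ∈ S ∩ V, x ∉ F := by
  by_contra! h
  -- If every signer in `V` were faulty, `S ∩ V` would be at most `V ∩ F`, which is less than
  -- a third of `V`.
  have hsub : S ∩ V ⊆ V ∩ F := fun x hx =>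
    Finset.mem_inter.2 ⟨(Finset.mem_inter.1 hx).2, h x hx⟩
  have hle := Finset.card_le_card hsub
  have hsplit := Finset.card_sdiff_add_card_inter V F
  omega
end

section
/- Soundness of sequential verification (a two-thirds commit under the security model contains a correct signer, weighted version): let w : α → ℕ be a voting power assignment, V a finite set of nodes (the validator set of a block), F a finite set of nodes (the faulty nodes) with totalVP(V \ F) > 2 · totalVP(V ∩ F), and S a finite set of nodes (the signers of a commit for the block) with 3 · totalVP(S ∩ V) > 2 · totalVP(V). Then there exists a node x ∈ S ∩ V with x ∉ F, i.e., the commit contains the signature of at least one correct validator. -/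
/-- Soundness of sequential verification (weighted version): if the correct
voting power in the validator set `V` exceeds twice the faulty voting power in
`V`, then a commit whose signers carry more than two thirds of the voting
power of `V` contains the signature of at least one correct validator. -/
theorem sequential_commit_has_correct_signer {α : Type*} [DecidableEq α]
    (w : α → ℕ) (V F S : Finset α)
    (hF : totalVP w (V \ F) > 2 * totalVP w (V ∩ F))
    (hS : 3 * totalVP w (S ∩ V) > 2 * totalVP w V) :
    ∃ x ∈ S ∩ V, x ∉ F := by
  -- Otherwise all signers in `V` are faulty, so they carry less than a third of the power of `V`.
  by_contra! h
  have hsub : S ∩ V ⊆ V ∩ F := fun x hx =>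
    Finset.mem_inter.2 ⟨(Finset.mem_inter.1 hx).2, h x hx⟩
  have hle : totalVP w (S ∩ V) ≤ totalVP w (V ∩ F) := Finset.sum_le_sum_of_subset hsub
  have hsplit : totalVP w (V ∩ F) + totalVP w (V \ F) = totalVP w V :=
    Finset.sum_inter_add_sum_sdiff V F w
  omega
end

section
/- State invariant of the light-client scheduling dynamics: for all integers t ≤ T, every execution s of length k of the light-client step relation starting at (t, T) satisfies, for every index i ≤ k with s i = (vᵢ, nᵢ): t ≤ vᵢ, vᵢ ≤ nᵢ ≤ T, and moreover vᵢ < nᵢ whenever vᵢ < T. -/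
/-- The light-client step relation on pairs `(v, n)` of integers, where `v` is
the height of the latest verified block and `n` is the next height to be
tried, with target height `T`. A step is either a success step (the block at
height `n` is verified) or a failure step (encoding scheduling conditions
(S1)-(S3); a failure step requires `n > v + 1`). -/
def step (T : ℤ) (p q : ℤ × ℤ) : Prop :=
  p.1 < T ∧
    ((q.1 = p.2 ∧
        ((p.2 < T ∧ p.2 < q.2 ∧ q.2 ≤ T) ∨ (p.2 = T ∧ q.2 = T))) ∨
      (q.1 = p.1 ∧ p.1 + 1 < p.2 ∧ p.1 < q.2 ∧ q.2 < p.2))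

/-- An execution of length `k` of the light-client step relation starting at
`(t, T)`. -/
def IsExec (t T : ℤ) (k : ℕ) (s : ℕ → ℤ × ℤ) : Prop :=
  s 0 = (t, T) ∧ ∀ i < k, step T (s i) (s (i + 1))

/-- State invariant of the light-client scheduling dynamics: along any
execution starting at `(t, T)` with `t ≤ T`, every state `(v, n)` satisfies
`t ≤ v`, `v ≤ n ≤ T`, and `v < n` whenever `v < T`. -/
theorem lightClient_state_invariant (t T : ℤ) (ht : t ≤ T)
    (k : ℕ) (s : ℕ → ℤ × ℤ) (hs : IsExec t T k s) :
    ∀ i ≤ k,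
      t ≤ (s i).1 ∧ (s i).1 ≤ (s i).2 ∧ (s i).2 ≤ T ∧
        ((s i).1 < T → (s i).1 < (s i).2) := by
  intro i
  -- The conjunction is inductive: a success step moves `v` up to `n ≤ T` (with the new `n` above it
  -- unless `n = T`), and a failure step keeps `v` and picks the new `n` strictly between `v` and `n`.
  induction i with
  | zero =>
    intro _
    simp only [hs.1]
    omega
  | succ i ih =>
    intro hi
    have hinv := ih (by omega)
    have hstep := hs.2 i (by omega)
    unfold step at hstep
    omega
end

section
/- Monotonicity of the verified height in the light-client scheduling dynamics: for all integers t ≤ T, every execution s of length k of the light-client step relation starting at (t, T) satisfies, for all indices i ≤ j ≤ k with s i = (vᵢ, nᵢ) and s j = (vⱼ, nⱼ), that vᵢ ≤ vⱼ; moreover, for every i < k, if the step from s i to s (i+1) is a success step (i.e., v_{i+1} = nᵢ) then vᵢ < v_{i+1}. -/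
/-- The restriction to `v < T` is needed because a terminal state is `(T, T)`. -/
theorem next_gt_verified {t T : ℤ} {k : ℕ} {s : ℕ → ℤ × ℤ} (hs : IsExec t T k s) :
    ∀ i ≤ k, (s i).1 < T → (s i).1 < (s i).2 := by
  intro i
  cases i with
  | zero =>
    intro _ h
    simpa [hs.1] using h
  | succ i =>
    intro hi h
    have hstep := hs.2 i hi
    unfold step at hstep
    omega

/-- Monotonicity of the verified height in the light-client scheduling
dynamics: along any execution the verified height is nondecreasing, and it
strictly increases at every success step. -/
theorem lightClient_verified_height_mono (t T : ℤ) (ht : t ≤ T)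
    (k : ℕ) (s : ℕ → ℤ × ℤ) (hs : IsExec t T k s) :
    (∀ i j, i ≤ j → j ≤ k → (s i).1 ≤ (s j).1) ∧
      (∀ i < k, (s (i + 1)).1 = (s i).2 → (s i).1 < (s (i + 1)).1) := by
  have hsucc : ∀ i < k, (s (i + 1)).1 = (s i).2 → (s i).1 < (s (i + 1)).1 := by
    intro i hi h
    rw [h]
    exact next_gt_verified hs i hi.le (hs.2 i hi).1
  refine ⟨?_, hsucc⟩
  intro i j hij
  induction j, hij using Nat.le_induction with
  | base => exact fun _ => le_rfl
  | succ j _ ih =>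
    intro hj
    refine (ih (Nat.le_of_succ_le hj)).trans ?_
    rcases (hs.2 j hj).2 with h | h
    · exact (hsucc j hj h.1).le
    · exact h.1.ge
end

section
/- Bound on consecutive failure steps in the light-client scheduling dynamics: for all integers t ≤ T, every execution s of length k of the light-client step relation starting at (t, T) satisfies: for all indices i < j ≤ k, if the verified height stays constant on the segment, i.e., the first component of s l equals vᵢ for all l with i ≤ l ≤ j (where s i = (vᵢ, nᵢ)), then j − i ≤ nᵢ − vᵢ − 1. -/
/-- The height to be tried stays above the verified height as long as the target is not reached.
At the target itself `v = n = T` is possible, so the hypothesis `v < T` is needed. -/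
theorem IsExec.fst_lt_snd {t T : ℤ} {k : ℕ} {s : ℕ → ℤ × ℤ} (hs : IsExec t T k s)
    {i : ℕ} (hi : i ≤ k) (hT : (s i).1 < T) : (s i).1 < (s i).2 := by
  cases i with
  | zero => simpa [hs.1] using hT
  | succ m =>
    have h := hs.2 m (by omega)
    unfold step at h
    omega

theorem step.failure_of_fst_eq {T : ℤ} {p q : ℤ × ℤ} (h : step T p q) (hp : p.1 < p.2)
    (hq : q.1 = p.1) : p.1 < q.2 ∧ q.2 + 1 ≤ p.2 := by
  unfold step at h
  omega

/-- Bound on consecutive failure steps in the light-client scheduling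
dynamics: if along a segment of an execution the verified height stays
constant, then the length of the segment is at most `nᵢ - vᵢ - 1`, where
`(vᵢ, nᵢ)` is the state at the start of the segment. -/
theorem lightClient_failure_segment_bound (t T : ℤ) (ht : t ≤ T)
    (k : ℕ) (s : ℕ → ℤ × ℤ) (hs : IsExec t T k s) :
    ∀ i j, i < j → j ≤ k →
      (∀ l, i ≤ l → l ≤ j → (s l).1 = (s i).1) →
      (j : ℤ) - (i : ℤ) ≤ (s i).2 - (s i).1 - 1 := by
  intro i j hij hjk hconst
  have key : ∀ d : ℕ, i + d ≤ j →
      (s i).1 < (s (i + d)).2 ∧ (s (i + d)).2 + d ≤ (s i).2 := by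
    intro d
    induction d with
    | zero =>
      intro _
      have := hs.fst_lt_snd (i := i) (by omega) (hs.2 i (by omega)).1
      simpa using this
    | succ d ih =>
      intro hd
      obtain ⟨h1, h2⟩ := ih (by omega)
      have hv := hconst (i + d) (by omega) (by omega)
      have hv' := hconst (i + d + 1) (by omega) (by omega)
      have hf := (hs.2 (i + d) (by omega)).failure_of_fst_eq (by omega) (by omega)
      rw [← Nat.add_assoc]
      push_cast
      omega
  obtain ⟨d, rfl⟩ := Nat.exists_eq_add_of_lt hij
  have := key (d + 1) (by omega)
  push_cast at this ⊢
  omega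
end

section
/- Bound on the number of success steps in the light-client scheduling dynamics: for all integers t ≤ T, every execution s of length k of the light-client step relation starting at (t, T) has at most T − t indices i < k at which the verified height strictly increases, i.e., the number of i < k with (s i).1 < (s (i+1)).1 is at most T − t. -/
/-- The invariant of an execution: after `j` steps the pair `(v, n)` satisfies `v ≤ T`, `n ≤ T`, and
`v < n` unless the target is already reached, while the number of strict increases so far is at
most `v - t`. -/
theorem exec_invariant {t T : ℤ} (ht : t ≤ T) {k : ℕ} {s : ℕ → ℤ × ℤ} (hs : IsExec t T k s)
    (j : ℕ) (hj : j ≤ k) :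
    (((Finset.range j).filter (fun i => (s i).1 < (s (i + 1)).1)).card : ℤ) ≤ (s j).1 - t ∧
      (s j).1 ≤ T ∧ (s j).2 ≤ T ∧ ((s j).1 < T → (s j).1 < (s j).2) := by
  induction j with
  | zero => simp [hs.1, ht]
  | succ j ih =>
    obtain ⟨hc, hv, hn, hlt⟩ := ih (by omega)
    have hstep := hs.2 j (by omega)
    unfold step at hstep
    rw [Finset.range_add_one, Finset.filter_insert]
    split_ifs with hinc
    · rw [Finset.card_insert_of_notMem (by simp)]
      push_cast
      omega
    · omega

/-- Bound on the number of success steps in the light-client scheduling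
dynamics: the number of indices `i < k` at which the verified height strictly
increases is at most `T - t`. -/
theorem lightClient_success_steps_bound (t T : ℤ) (ht : t ≤ T)
    (k : ℕ) (s : ℕ → ℤ × ℤ) (hs : IsExec t T k s) :
    (((Finset.range k).filter (fun i => (s i).1 < (s (i + 1)).1)).card : ℤ)
      ≤ T - t := by
  have h := exec_invariant ht hs k le_rfl
  omega
end

section
/- Worst-case complexity of light-client verification (the TLA+ Complexity invariant): for all integers t ≤ T, let N = T − t + 1; then every execution s of length k of the light-client step relation starting at (t, T) satisfies 2 · k ≤ N · (N − 1). In other words, the number of block probes performed by the light client before reaching the target height T from trusted height t never exceeds N(N−1)/2. -/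
/-- The invariant of the states of an execution: `v < n ≤ T` until the target is verified,
and `(T, T)` afterwards. -/
def Reachable (T : ℤ) (p : ℤ × ℤ) : Prop :=
  p.1 < p.2 ∧ p.2 ≤ T ∨ p.1 = T ∧ p.2 = T

/-- Twice the largest number of steps possible from a reachable state `(v, n)`. -/
def potential (T : ℤ) (p : ℤ × ℤ) : ℤ :=
  2 * (p.2 - p.1) + (T - p.1 - 1) * (T - p.1)

theorem Reachable.step {T : ℤ} {p q : ℤ × ℤ} (hp : Reachable T p) (h : step T p q) :
    Reachable T q := by
  unfold Reachable _root_.step at *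
  omega

theorem Reachable.potential_nonneg {T : ℤ} {p : ℤ × ℤ} (hp : Reachable T p) :
    0 ≤ potential T p := by
  unfold potential
  rcases hp with ⟨h₁, h₂⟩ | ⟨h₁, h₂⟩
  · have : 0 ≤ (T - p.1 - 1) * (T - p.1) := mul_nonneg (by omega) (by omega)
    omega
  · simp [h₁, h₂]

theorem potential_step {T : ℤ} {p q : ℤ × ℤ} (hp : Reachable T p) (h : step T p q) :
    potential T q + 2 ≤ potential T p := by
  obtain ⟨v, n⟩ := p
  obtain ⟨v', n'⟩ := q
  simp only [Reachable, step, potential] at *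
  obtain ⟨hv, ⟨rfl, h⟩ | ⟨rfl, h₁, h₂, h₃⟩⟩ := h
  · have hn : v < v' ∧ v' ≤ T ∧ n' ≤ T := by omega
    obtain ⟨h₁, h₂, h₃⟩ := hn
    -- With `a = T - v'` and `b = T - v - 1`, this is monotonicity of `x * (x + 1)` on `x ≥ 0`.
    have : (T - v') * (T - v' + 1) ≤ (T - v - 1) * (T - v - 1 + 1) :=
      mul_le_mul (by omega) (by omega) (by omega) (by omega)
    nlinarith
  · omega

/-- Worst-case complexity of light-client verification (the TLA+ Complexity
invariant): with `N = T - t + 1`, every execution of length `k` starting at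
`(t, T)` satisfies `2 * k ≤ N * (N - 1)`. -/
theorem lightClient_complexity (t T : ℤ) (ht : t ≤ T)
    (k : ℕ) (s : ℕ → ℤ × ℤ) (hs : IsExec t T k s) :
    2 * (k : ℤ) ≤ (T - t + 1) * (T - t + 1 - 1) := by
  obtain ⟨h0, hstep⟩ := hs
  have key : ∀ i ≤ k, Reachable T (s i) ∧
      2 * (i : ℤ) + potential T (s i) ≤ potential T (t, T) := by
    intro i
    induction i with
    | zero =>
      intro _
      rw [h0]
      refine ⟨?_, by simp⟩
      rcases ht.lt_or_eq with h | h
      · exact Or.inl ⟨h, le_rfl⟩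
      · exact Or.inr ⟨h, rfl⟩
    | succ i ih =>
      intro hi
      obtain ⟨hr, hb⟩ := ih (by omega)
      have hst := hstep i (by omega)
      have hd := potential_step hr hst
      refine ⟨hr.step hst, ?_⟩
      push_cast
      linarith
  obtain ⟨hr, hb⟩ := key k le_rfl
  have hnn := hr.potential_nonneg
  have hstart : potential T (t, T) = (T - t + 1) * (T - t + 1 - 1) := by
    simp only [potential]
    ring
  linarith
end

section
/- Termination of light-client verification: for all integers t ≤ T, there is no infinite execution of the light-client step relation starting at (t, T); that is, there exists no function s : ℕ → ℤ × ℤ with s 0 = (t, T) such that step (s i) (s (i+1)) holds for every natural number i. -/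
/-- The invariant of reachable states; the second alternative is the final state, which has no
successor. -/
def StepInv (T : ℤ) (p : ℤ × ℤ) : Prop :=
  (p.1 < p.2 ∧ p.2 ≤ T) ∨ (p.1 = T ∧ p.2 = T)

theorem StepInv.of_step {T : ℤ} {p q : ℤ × ℤ} (hp : StepInv T p) (h : step T p q) :
    StepInv T q := by
  unfold StepInv step at *
  omega

/-- The termination measure `(T - v, n - v)`, ordered lexicographically. The truncation in
`Int.toNat` is harmless on states satisfying `StepInv`. -/
def stepMeasure (T : ℤ) (p : ℤ × ℤ) : ℕ ×ₗ ℕ :=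
  toLex ((T - p.1).toNat, (p.2 - p.1).toNat)

theorem stepMeasure_lt {T : ℤ} {p q : ℤ × ℤ} (hp : StepInv T p) (h : step T p q) :
    stepMeasure T q < stepMeasure T p := by
  unfold StepInv step at *
  simp only [stepMeasure, Prod.Lex.toLex_lt_toLex]
  omega

/-- Termination of light-client verification: there is no infinite execution
of the light-client step relation starting at `(t, T)`. -/
theorem lightClient_termination (t T : ℤ) (ht : t ≤ T) :
    ¬ ∃ s : ℕ → ℤ × ℤ, s 0 = (t, T) ∧ ∀ i : ℕ, step T (s i) (s (i + 1)) := by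
  rintro ⟨s, h0, hs⟩
  have hinv : ∀ i, StepInv T (s i) := by
    intro i
    induction i with
    | zero =>
      rw [h0]
      exact ht.lt_or_eq.imp (fun h => ⟨h, le_rfl⟩) (fun h => ⟨h, rfl⟩)
    | succ i ih => exact ih.of_step (hs i)
  exact not_strictAnti_of_wellFoundedLT (fun i => stepMeasure T (s i))
    (strictAnti_nat_of_succ_lt fun i => stepMeasure_lt (hinv i) (hs i))
end
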